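/- Nonwandering property of the free dynamics on the zero-momentum hyperplane: Assume Φ is admissible. Then every point of the hyperplane Π is nonwandering for the free dynamics; precisely, for every x̃ ∈ Π, every open neighborhood U of x̃ in ℝ^{2n}, and every T > 0, there exist a point y ∈ U ∩ Π, a time t > T, and a solution x : [0,t] → ℝ^{2n} of the free system ẋ = f(x) with x(0) = y and x(t) ∈ U. -/

import Mathlib

/-!
The recurrence of the free dynamics is Poincaré's theorem for a Hamiltonian flow. The only obstacle
is that energy sublevel sets are unbounded along translations of all particles. Replacing `q' = p`
by `q' = p - mean p` keeps the energy and also conserves the total position, and sublevel sets of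
these two integrals are bounded; subtracting the mean momentum maps solutions of the modified system
to zero-momentum solutions of the original one.

Invariance of volume needs no Liouville theorem: the flow is a limit of symplectic Euler steps,
which are compositions of shears and so preserve volume. A pointwise limit of volume-preserving maps
does not increase the measure of open sets, and on an invariant set of finite measure the total mass
then forces equality.
-/

open scoped BigOperators
open MeasureTheory Filter Set

noncomputable section

/-- The state space ℝ^{2n}, with coordinates (q,p). -/
abbrev State (n : ℕ) := (Fin n → ℝ) × (Fin n → ℝ)

/-- The drift vector field of the periodic multiparticle system,
`f(q,p) = Σ p_k ∂/∂q_k + Σ (φ(q_{k-1}-q_k) - φ(q_k-q_{k+1})) ∂/∂p_k` with `φ = Φ'`,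
with cyclic indexing in `Fin n`. -/
def drift (n : ℕ) [NeZero n] (Φ : ℝ → ℝ) (x : State n) : State n :=
  (x.2, fun k => deriv Φ (x.1 (k - 1) - x.1 k) - deriv Φ (x.1 k - x.1 (k + 1)))

/-- The momentum coordinate vector `e_{p_j} = ∂/∂p_j`. -/
def ep (n : ℕ) [NeZero n] (j : Fin n) : State n := (0, Pi.single j 1)

/-- The position coordinate vector `e_{q_j} = ∂/∂q_j`. -/
def eq' (n : ℕ) [NeZero n] (j : Fin n) : State n := (Pi.single j 1, 0)

/-- `Φ` is admissible: real analytic, bounded below, and `Φ(y) → +∞` as `y → +∞`. -/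
def Admissible (Φ : ℝ → ℝ) : Prop :=
  (∀ x, AnalyticAt ℝ Φ x) ∧ BddBelow (Set.range Φ) ∧ Tendsto Φ atTop atTop

/-- `Φ` is generic: for no `b` is `Φ''` even or odd about `b`. -/
def Generic (Φ : ℝ → ℝ) : Prop :=
  ∀ b : ℝ,
    (¬ ∀ t : ℝ, deriv (deriv Φ) (b + t) = deriv (deriv Φ) (b - t)) ∧
    (¬ ∀ t : ℝ, deriv (deriv Φ) (b + t) = - deriv (deriv Φ) (b - t))

/-- Lie bracket of vector fields: `[X,Y](x) = DY(x)·X(x) − DX(x)·Y(x)`. -/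
def lieBracket {n : ℕ} (X Y : State n → State n) : State n → State n :=
  fun x => fderiv ℝ Y x (X x) - fderiv ℝ X x (Y x)

/-- Admissible trajectory of the single forced system `ẋ = f(x) + u(t) g`
(in absolutely-continuous/integral form). -/
def IsTrajectory (n : ℕ) [NeZero n] (Φ : ℝ → ℝ) (θ : ℝ) (u : ℝ → ℝ)
    (x : ℝ → State n) : Prop :=
  ContinuousOn x (Set.Icc 0 θ) ∧
  ∀ t ∈ Set.Icc 0 θ,
    x t = x 0 + ∫ s in (0:ℝ)..t, (drift n Φ (x s) + u s • ep n 0)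

open Metric Topology Bornology
open scoped NNReal Manifold

section IntegralCurve

variable {E G G' : Type*} [NormedAddCommGroup E] [NormedSpace ℝ E]
  [NormedAddCommGroup G] [NormedSpace ℝ G] [NormedAddCommGroup G'] [NormedSpace ℝ G']

theorem exists_isIntegralCurve_of_bounded [CompleteSpace E] {X : E → E} (hX : ContDiff ℝ 1 X)
    {K M : ℝ≥0} (hK : LipschitzWith K X) (hM : ∀ x, ‖X x‖ ≤ M) (x : E) :
    ∃ γ : ℝ → E, γ 0 = x ∧ IsIntegralCurve γ (fun _ ↦ X) := by
  have hX' : CMDiff 1 (fun x ↦ (⟨x, X x⟩ : TangentBundle 𝓘(ℝ, E) E)) :=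
    contMDiff_vectorSpace_iff_contDiff.mpr hX
  obtain ⟨γ, hγx, hγ⟩ := exists_isMIntegralCurve_of_isMIntegralCurveOn hX' one_pos
    (fun x ↦ by
      have hPL : IsPicardLindelof (fun _ ↦ X) (tmin := -1) (tmax := 1) ⟨0, by simp⟩ x M 0 M K :=
        .of_time_independent (fun y _ ↦ hM y) hK.lipschitzOnWith (by simp)
      obtain ⟨γ, hγx, hγ⟩ := hPL.exists_eq_forall_mem_Icc_hasDerivWithinAt₀
      exact ⟨γ, hγx, fun t ht ↦
        ((hγ t (Ioo_subset_Icc_self ht)).mono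
          Ioo_subset_Icc_self).hasFDerivWithinAt.hasMFDerivWithinAt⟩) x
  exact ⟨γ, hγx, fun t ↦ (hγ t).hasFDerivAt⟩

theorem eq_of_isIntegralCurve_of_lipschitzWith {X : E → E} {K : ℝ≥0} (hX : LipschitzWith K X)
    {γ γ' : ℝ → E} (hγ : IsIntegralCurve γ fun _ ↦ X) (hγ' : IsIntegralCurve γ' fun _ ↦ X)
    {t₀ : ℝ} (h : γ t₀ = γ' t₀) : γ = γ' :=
  ODE_solution_unique_univ (s := fun _ ↦ univ) (fun _ ↦ hX.lipschitzOnWith)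
    (fun t ↦ ⟨hγ t, mem_univ _⟩) (fun t ↦ ⟨hγ' t, mem_univ _⟩) h

theorem iterate_isIntegralCurve_apply {X : E → E} {K : ℝ≥0} (hX : LipschitzWith K X)
    {γ : E → ℝ → E} (hγ₀ : ∀ x, γ x 0 = x) (hγ : ∀ x, IsIntegralCurve (γ x) fun _ ↦ X)
    (t : ℝ) (k : ℕ) (x : E) : (fun y ↦ γ y t)^[k] x = γ x (k * t) := by
  induction k with
  | zero => simp [hγ₀]
  | succ k ih =>
    have hshift : γ (γ x (k * t)) = γ x ∘ (· + k * t) :=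
      eq_of_isIntegralCurve_of_lipschitzWith hX (hγ _) ((hγ x).comp_add _) (t₀ := 0)
        (by simp [hγ₀])
    rw [Function.iterate_succ_apply', ih, hshift, Function.comp_apply]
    congr 1
    push_cast
    ring

theorem exists_lipschitz_bounded_eqOn [FiniteDimensional ℝ E] {X : E → G} (hX : ContDiff ℝ 1 X)
    {s : Set E} (hs : IsBounded s) :
    ∃ χ : E → ℝ, ContDiff ℝ 1 (χ • X) ∧ (∃ K, LipschitzWith K (χ • X)) ∧
      (∃ M : ℝ≥0, ∀ x, ‖(χ • X) x‖ ≤ M) ∧ EqOn (χ • X) X s := by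
  obtain ⟨r, hr, hsr⟩ := hs.subset_closedBall_lt 0 (0 : E)
  let χ : ContDiffBump (0 : E) := ⟨r, r + 1, hr, lt_add_one r⟩
  have hsupp : HasCompactSupport (⇑χ • X) := χ.hasCompactSupport.smul_right
  have hsmooth : ContDiff ℝ 1 (⇑χ • X) := χ.contDiff.smul hX
  obtain ⟨M, hM⟩ := hsupp.exists_bound_of_continuous hsmooth.continuous
  exact ⟨χ, hsmooth, hsmooth.lipschitzWith_of_hasCompactSupport hsupp one_ne_zero,
    ⟨M.toNNReal, fun x ↦ (hM x).trans (Real.le_coe_toNNReal M)⟩,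
    fun x hx ↦ by simp [χ.one_of_mem_closedBall (hsr hx)]⟩

/-- `I` is a first integral (conserved quantity) of the vector field `X`: its derivative along `X`
vanishes. The target `G` may be a product, so that several integrals are handled at once. -/
structure IsFirstIntegral (X : E → E) (I : E → G) : Prop where
  differentiable : Differentiable ℝ I
  fderiv_apply_eq_zero (x : E) : fderiv ℝ I x (X x) = 0

namespace IsFirstIntegral

variable {X : E → E} {I : E → G} {J : E → G'}

theorem smul (hI : IsFirstIntegral X I) (χ : E → ℝ) : IsFirstIntegral (χ • X) I where
  differentiable := hI.differentiable
  fderiv_apply_eq_zero x := by simp [hI.fderiv_apply_eq_zero]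

theorem prodMk (hI : IsFirstIntegral X I) (hJ : IsFirstIntegral X J) :
    IsFirstIntegral X fun x ↦ (I x, J x) where
  differentiable := hI.differentiable.prodMk hJ.differentiable
  fderiv_apply_eq_zero x := by
    rw [(hI.differentiable x).fderiv_prodMk (hJ.differentiable x)]
    simp [hI.fderiv_apply_eq_zero, hJ.fderiv_apply_eq_zero]

theorem apply_eq_apply (hI : IsFirstIntegral X I) {γ : ℝ → E}
    (hγ : IsIntegralCurve γ fun _ ↦ X) (s t : ℝ) : I (γ s) = I (γ t) := by
  have hderiv (r : ℝ) : HasDerivAt (I ∘ γ) 0 r :=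
    hI.fderiv_apply_eq_zero (γ r) ▸ (hI.differentiable _).hasFDerivAt.comp_hasDerivAt r (hγ r)
  exact is_const_of_deriv_eq_zero (fun r ↦ (hderiv r).differentiableAt)
    (fun r ↦ (hderiv r).deriv) s t

theorem exists_isIntegralCurve [FiniteDimensional ℝ E] (hI : IsFirstIntegral X I)
    (hX : ContDiff ℝ 1 X) {x : E} (hx : IsBounded (I ⁻¹' {I x})) :
    ∃ γ : ℝ → E, γ 0 = x ∧ IsIntegralCurve γ fun _ ↦ X := by
  obtain ⟨χ, hχX, ⟨K, hK⟩, ⟨M, hM⟩, heq⟩ := exists_lipschitz_bounded_eqOn hX hx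
  obtain ⟨γ, rfl, hγ⟩ := exists_isIntegralCurve_of_bounded hχX hK hM x
  refine ⟨γ, rfl, fun t ↦ ?_⟩
  have hmem : I (γ t) = I (γ 0) := (hI.smul χ).apply_eq_apply hγ t 0
  exact (hγ t).congr_deriv (heq hmem)

end IsFirstIntegral
end IntegralCurve

theorem dist_iterate_le_of_pseudoOrbit {X : Type*} [PseudoMetricSpace X] {f : X → X} {b c : ℝ}
    (hb : 0 ≤ b) (hc : 0 ≤ c) (hf : ∀ x y, dist (f x) (f y) ≤ (1 + c) * dist x y) {x : ℕ → X}
    (hx : ∀ k, dist (f (x k)) (x (k + 1)) ≤ b) (k : ℕ) :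
    dist (f^[k] (x 0)) (x k) ≤ k * b * Real.exp (k * c) := by
  have hstep (k : ℕ) :
      dist (f^[k + 1] (x 0)) (x (k + 1)) ≤ (1 + c) * dist (f^[k] (x 0)) (x k) + b := by
    rw [Function.iterate_succ_apply']
    exact (dist_triangle _ (f (x k)) _).trans (add_le_add (hf _ _) (hx k))
  simpa using discrete_gronwall (u := fun k ↦ dist (f^[k] (x 0)) (x k)) (n₀ := 0)
    (b := fun _ ↦ b) (c := fun _ ↦ c) dist_nonneg
    (fun k _ ↦ hstep k) (fun _ _ ↦ hc) (fun _ _ ↦ hb) k.zero_le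

theorem norm_add_smul_sub_le_of_hasDerivAt {E : Type*} [NormedAddCommGroup E] [NormedSpace ℝ E]
    {y y' : ℝ → E} (hy : ∀ r, HasDerivAt y (y' r) r) {s h ε : ℝ} (hh : 0 ≤ h) {c : E}
    (hε : ∀ r ∈ Icc s (s + h), ‖y' r - c‖ ≤ ε) : ‖y s + h • c - y (s + h)‖ ≤ ε * h := by
  have hderiv (r : ℝ) : HasDerivAt (fun r ↦ y r - r • c) (y' r - c) r := by
    simpa using! (hy r).sub ((hasDerivAt_id r).smul_const c)
  have hbound := norm_image_sub_le_of_norm_deriv_le_segment' (fun r _ ↦ (hderiv r).hasDerivWithinAt)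
    (fun r hr ↦ hε r (Ico_subset_Icc_self hr)) (s + h) (right_mem_Icc.2 (by linarith))
  have hsplit : y (s + h) - (y s + h • c) = y (s + h) - (s + h) • c - (y s - s • c) := by module
  rw [add_sub_cancel_left] at hbound
  rwa [norm_sub_rev, hsplit]

theorem dist_add_smul_le {X F : Type*} [PseudoMetricSpace X] [NormedAddCommGroup F]
    [NormedSpace ℝ F] {f : X → F} {K : ℝ≥0} (hf : LipschitzWith K f) {h : ℝ} (hh : 0 ≤ h)
    (a a' : X) (b b' : F) :
    dist (b + h • f a) (b' + h • f a') ≤ dist b b' + h * K * dist a a' := by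
  calc dist (b + h • f a) (b' + h • f a')
      ≤ dist b b' + dist (h • f a) (h • f a') := dist_add_add_le _ _ _ _
    _ = dist b b' + h * dist (f a) (f a') := by rw [dist_smul₀, Real.norm_of_nonneg hh]
    _ ≤ dist b b' + h * K * dist a a' := by
      rw [mul_assoc]
      gcongr
      exact hf.dist_le_mul a a'

/-- The separable vector field `q' = v p`, `p' = w q` on `E × F`, as for a Hamiltonian
`T(p) + V(q)`. -/
def splitField {E F : Type*} (v : F → E) (w : E → F) (x : E × F) : E × F := (v x.2, w x.1)

theorem lipschitzWith_splitField {E F : Type*} [PseudoEMetricSpace E]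
    [PseudoEMetricSpace F] {v : F → E} {w : E → F} {K : ℝ≥0}
    (hv : LipschitzWith K v) (hw : LipschitzWith K w) :
    LipschitzWith K (splitField v w) := by
  simpa using! (hv.comp .prod_snd).prodMk (hw.comp .prod_fst)

section SplitField

variable {E F : Type*} [NormedAddCommGroup E] [NormedSpace ℝ E]
  [NormedAddCommGroup F] [NormedSpace ℝ F] {v : F → E} {w : E → F} {K M : ℝ≥0} {h : ℝ}

theorem contDiff_splitField {k : WithTop ℕ∞} (hv : ContDiff ℝ k v) (hw : ContDiff ℝ k w) :
    ContDiff ℝ k (splitField v w) :=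
  (hv.comp contDiff_snd).prodMk (hw.comp contDiff_fst)

/-- One symplectic Euler step of size `h` for `splitField v w`: first the kick `p ↦ p + h w q`,
then the drift `q ↦ q + h v p` with the updated `p`. -/
def splitStep (v : F → E) (w : E → F) (h : ℝ) (x : E × F) : E × F :=
  (x.1 + h • v (x.2 + h • w x.1), x.2 + h • w x.1)

theorem dist_splitStep_le (hv : LipschitzWith K v) (hw : LipschitzWith K w) (hh : 0 ≤ h)
    (x y : E × F) :
    dist (splitStep v w h x) (splitStep v w h y) ≤ (1 + h * K * (2 + h * K)) * dist x y := by
  have hx₁ : dist x.1 y.1 ≤ dist x y := le_max_left _ _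
  have hx₂ : dist x.2 y.2 ≤ dist x y := le_max_right _ _
  have hhK : 0 ≤ h * K := by positivity
  have hkick : dist (splitStep v w h x).2 (splitStep v w h y).2 ≤ (1 + h * K) * dist x y :=
    (dist_add_smul_le hw hh ..).trans (by nlinarith)
  have hdrift : dist (splitStep v w h x).1 (splitStep v w h y).1 ≤
      dist x y + h * K * ((1 + h * K) * dist x y) :=
    (dist_add_smul_le hv hh ..).trans (by gcongr; exact hkick)
  have hd : 0 ≤ dist x y := dist_nonneg
  exact max_le (hdrift.trans (by nlinarith [mul_nonneg hhK hd]))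
    (hkick.trans (by nlinarith [mul_nonneg hhK hd, mul_nonneg hhK (mul_nonneg hhK hd)]))

theorem dist_splitStep_integralCurve_le (hv : LipschitzWith K v) (hw : LipschitzWith K w)
    (hvM : ∀ y, ‖v y‖ ≤ M) (hwM : ∀ x, ‖w x‖ ≤ M) {γ : ℝ → E × F}
    (hγ : IsIntegralCurve γ fun _ ↦ splitField v w) (hh : 0 ≤ h) (s : ℝ) :
    dist (splitStep v w h (γ s)) (γ (s + h)) ≤ 2 * K * M * h ^ 2 := by
  have hq (r : ℝ) : HasDerivAt (fun r ↦ (γ r).1) (v (γ r).2) r := (hγ r).fst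
  have hp (r : ℝ) : HasDerivAt (fun r ↦ (γ r).2) (w (γ r).1) r := (hγ r).snd
  have hq_near (r) (hr : r ∈ Icc s (s + h)) : ‖(γ r).1 - (γ s).1‖ ≤ M * h :=
    (norm_image_sub_le_of_norm_deriv_le_segment' (fun r _ ↦ (hq r).hasDerivWithinAt)
      (fun r _ ↦ hvM _) r hr).trans (by gcongr; linarith [hr.2])
  have hp_near (r) (hr : r ∈ Icc s (s + h)) : ‖(γ r).2 - (γ s).2‖ ≤ M * h :=
    (norm_image_sub_le_of_norm_deriv_le_segment' (fun r _ ↦ (hp r).hasDerivWithinAt)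
      (fun r _ ↦ hwM _) r hr).trans (by gcongr; linarith [hr.2])
  have hkick : ‖(γ s).2 + h • w (γ s).1 - (γ (s + h)).2‖ ≤ K * (M * h) * h :=
    norm_add_smul_sub_le_of_hasDerivAt hp hh fun r hr ↦
      (hw.norm_sub_le _ _).trans (by gcongr; exact hq_near r hr)
  have hdrift : ‖(γ s).1 + h • v ((γ s).2 + h • w (γ s).1) - (γ (s + h)).1‖ ≤
      K * (M * h + h * M) * h := by
    refine norm_add_smul_sub_le_of_hasDerivAt hq hh fun r hr ↦ (hv.norm_sub_le _ _).trans ?_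
    gcongr
    rw [← sub_sub]
    refine (norm_sub_le _ _).trans (add_le_add (hp_near r hr) ?_)
    rw [norm_smul, Real.norm_of_nonneg hh]
    gcongr
    exact hwM _
  rw [dist_eq_norm]
  refine max_le (hdrift.trans_eq (by ring)) (hkick.trans ?_)
  have hKM : 0 ≤ K * M * h ^ 2 := by positivity
  linarith

theorem tendsto_iterate_splitStep (hv : LipschitzWith K v) (hw : LipschitzWith K w)
    (hvM : ∀ y, ‖v y‖ ≤ M) (hwM : ∀ x, ‖w x‖ ≤ M) {γ : ℝ → E × F}
    (hγ : IsIntegralCurve γ fun _ ↦ splitField v w) {t : ℝ} (ht : 0 ≤ t) :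
    Tendsto (fun m : ℕ ↦ (splitStep v w (t / m))^[m] (γ 0)) atTop (𝓝 (γ t)) := by
  have herr (m : ℕ) (hm : m ≠ 0) : dist ((splitStep v w (t / m))^[m] (γ 0)) (γ t) ≤
      2 * K * M * t ^ 2 / m * Real.exp (t * K * (2 + t * K / m)) := by
    have hh : 0 ≤ t / m := by positivity
    have horbit (k : ℕ) : dist (splitStep v w (t / m) (γ (k * (t / m))))
        (γ ((k + 1 : ℕ) * (t / m))) ≤ 2 * K * M * (t / m) ^ 2 := by
      simpa [add_mul] using dist_splitStep_integralCurve_le hv hw hvM hwM hγ hh (k * (t / m))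
    have hshadow := dist_iterate_le_of_pseudoOrbit (by positivity) (by positivity)
      (dist_splitStep_le hv hw hh) horbit m
    rw [Nat.cast_zero, zero_mul, mul_div_cancel₀ t (Nat.cast_ne_zero.2 hm)] at hshadow
    convert hshadow using 2 <;> field_simp
  have hlim : Tendsto (fun m : ℕ ↦ 2 * K * M * t ^ 2 / m * Real.exp (t * K * (2 + t * K / m)))
      atTop (𝓝 (0 * Real.exp (t * K * (2 + 0)))) :=
    (tendsto_const_div_atTop_nhds_zero_nat _).mul <|
      (Real.continuous_exp.tendsto _).comp <|
        (tendsto_const_nhds.add (tendsto_const_div_atTop_nhds_zero_nat _)).const_mul _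
  rw [zero_mul] at hlim
  rw [tendsto_iff_dist_tendsto_zero]
  exact squeeze_zero' (.of_forall fun _ ↦ dist_nonneg)
    ((eventually_ne_atTop 0).mono herr) hlim

end SplitField

section Measure

variable {α β : Type*} [MeasurableSpace α] {μ : Measure α} [MeasurableSpace β]

theorem measure_liminf_le_liminf_measure (s : ℕ → Set α) :
    μ (liminf s atTop) ≤ liminf (fun m ↦ μ (s m)) atTop := by
  simp only [liminf_eq_iSup_iInf_of_nat, iSup_eq_iUnion, iInf_eq_iInter]
  have hmono : Monotone fun N ↦ ⋂ m ≥ N, s m := fun _ _ hN ↦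
    biInter_subset_biInter_left fun _ hm ↦ le_trans hN hm
  rw [hmono.measure_iUnion]
  exact iSup_mono fun N ↦ le_iInf₂ fun m hm ↦ measure_mono (biInter_subset_of_mem hm)

theorem map_le_of_tendsto_of_measurePreserving [TopologicalSpace β]
    [BorelSpace β] {ν : Measure β} [ν.OuterRegular] {f : ℕ → α → β}
    (hf : ∀ m, MeasurePreserving (f m) μ ν) {g : α → β} (hg : Measurable g)
    (hlim : ∀ x, Tendsto (f · x) atTop (𝓝 (g x))) : μ.map g ≤ ν := by
  have hopen (U : Set β) (hU : IsOpen U) : μ (g ⁻¹' U) ≤ ν U := by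
    have hsub : g ⁻¹' U ⊆ liminf (fun m ↦ f m ⁻¹' U) atTop := fun x hx ↦
      mem_liminf_iff_eventually_mem.2 ((hlim x).eventually (hU.mem_nhds hx))
    calc μ (g ⁻¹' U) ≤ μ (liminf (fun m ↦ f m ⁻¹' U) atTop) := measure_mono hsub
      _ ≤ liminf (fun m ↦ μ (f m ⁻¹' U)) atTop := measure_liminf_le_liminf_measure _
      _ = ν U := by simp [(hf _).measure_preimage hU.measurableSet.nullMeasurableSet]
  refine Measure.le_iff.2 fun s hs ↦ ?_
  rw [Measure.map_apply hg hs, s.measure_eq_iInf_isOpen]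
  exact le_iInf₂ fun U hsU ↦ le_iInf fun hU ↦ (measure_mono (preimage_mono hsU)).trans (hopen U hU)

theorem measurePreserving_restrict_of_map_le {f : α → α} (hf : Measurable f) (hle : μ.map f ≤ μ)
    {S : Set α} (hSf : MapsTo f S S) (hS : MeasurableSet S) (hμS : μ S ≠ ⊤) :
    MeasurePreserving f (μ.restrict S) (μ.restrict S) := by
  have : IsFiniteMeasure (μ.restrict S) := isFiniteMeasure_restrict.2 hμS
  refine ⟨hf, Measure.eq_of_le_of_measure_univ_eq (Measure.le_iff.2 fun s hs ↦ ?_) ?_⟩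
  · rw [Measure.map_apply hf hs, Measure.restrict_apply (hf hs), Measure.restrict_apply hs]
    calc μ (f ⁻¹' s ∩ S) ≤ μ (f ⁻¹' (s ∩ S)) := measure_mono fun x hx ↦ ⟨hx.1, hSf hx.2⟩
      _ = μ.map f (s ∩ S) := (Measure.map_apply hf (hs.inter hS)).symm
      _ ≤ μ (s ∩ S) := hle _
  · rw [Measure.map_apply hf .univ, preimage_univ]

theorem measurePreserving_prod_add {G : Type*} [AddGroup G] [MeasurableSpace G] [MeasurableAdd₂ G]
    [SFinite μ] (ν : Measure G) [SFinite ν] [ν.IsAddRightInvariant] {f : α → G}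
    (hf : Measurable f) :
    MeasurePreserving (fun x : α × G ↦ (x.1, x.2 + f x.1)) (μ.prod ν) (μ.prod ν) :=
  (MeasurePreserving.id μ).skew_product (g := fun a b ↦ b + f a)
    (measurable_snd.add (hf.comp measurable_fst)) (.of_forall fun a ↦ map_add_right_eq_self ν (f a))

end Measure

section Recurrence

variable {E F : Type*} [NormedAddCommGroup E] [NormedSpace ℝ E] [FiniteDimensional ℝ E]
  [NormedAddCommGroup F] [NormedSpace ℝ F] [FiniteDimensional ℝ F] {v : F → E} {w : E → F}

theorem measurePreserving_splitStep [MeasurableSpace E] [BorelSpace E] [MeasurableSpace F]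
    [BorelSpace F] (μ : Measure E) [μ.IsAddHaarMeasure] (ν : Measure F) [ν.IsAddHaarMeasure]
    (hv : Continuous v) (hw : Continuous w) (h : ℝ) :
    MeasurePreserving (splitStep v w h) (μ.prod ν) (μ.prod ν) := by
  have hkick := measurePreserving_prod_add (μ := μ) ν (hw.const_smul h).measurable
  have hdrift := measurePreserving_prod_add (μ := ν) μ (hv.const_smul h).measurable
  exact (Measure.measurePreserving_swap.comp hdrift).comp
    (Measure.measurePreserving_swap.comp hkick)

theorem measurePreserving_restrict_integralCurve_splitField [MeasurableSpace E] [BorelSpace E]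
    [MeasurableSpace F] [BorelSpace F] (μ : Measure E) [μ.IsAddHaarMeasure] (ν : Measure F)
    [ν.IsAddHaarMeasure] {K M : ℝ≥0} (hv : LipschitzWith K v) (hw : LipschitzWith K w)
    (hvM : ∀ y, ‖v y‖ ≤ M) (hwM : ∀ x, ‖w x‖ ≤ M) {γ : E × F → ℝ → E × F}
    (hγ₀ : ∀ x, γ x 0 = x) (hγ : ∀ x, IsIntegralCurve (γ x) fun _ ↦ splitField v w) {t : ℝ}
    (ht : 0 ≤ t) {S : Set (E × F)} (hS : IsBounded S) (hSm : MeasurableSet S)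
    (hSγ : ∀ x ∈ S, γ x t ∈ S) :
    MeasurePreserving (γ · t) ((μ.prod ν).restrict S) ((μ.prod ν).restrict S) := by
  have hstep (m : ℕ) :
      MeasurePreserving (splitStep v w (t / m))^[m] (μ.prod ν) (μ.prod ν) :=
    (measurePreserving_splitStep μ ν hv.continuous hw.continuous _).iterate m
  have hlim (x : E × F) :
      Tendsto (fun m : ℕ ↦ (splitStep v w (t / m))^[m] x) atTop (𝓝 (γ x t)) := by
    simpa only [hγ₀] using tendsto_iterate_splitStep hv hw hvM hwM (hγ x) ht
  have hmeas : Measurable (γ · t) :=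
    measurable_of_tendsto_metrizable (fun m ↦ (hstep m).measurable) (tendsto_pi_nhds.2 hlim)
  exact measurePreserving_restrict_of_map_le hmeas
    (map_le_of_tendsto_of_measurePreserving hstep hmeas hlim) hSγ hSm hS.measure_lt_top.ne

theorem exists_recurrent_isIntegralCurve_splitField_of_lipschitzWith {K M : ℝ≥0}
    (hv : ContDiff ℝ 1 v) (hw : ContDiff ℝ 1 w) (hvK : LipschitzWith K v)
    (hwK : LipschitzWith K w) (hvM : ∀ y, ‖v y‖ ≤ M) (hwM : ∀ x, ‖w x‖ ≤ M) {S V : Set (E × F)}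
    (hS : IsBounded S) (hSo : IsOpen S)
    (hSγ : ∀ γ : ℝ → E × F, IsIntegralCurve γ (fun _ ↦ splitField v w) → γ 0 ∈ S → ∀ t, γ t ∈ S)
    (hVo : IsOpen V) (hV : V.Nonempty) (hVS : V ⊆ S) (T : ℝ) :
    ∃ γ : ℝ → E × F, IsIntegralCurve γ (fun _ ↦ splitField v w) ∧
      γ 0 ∈ V ∧ ∃ t > T, γ t ∈ V := by
  borelize E F
  let μ : Measure E := .addHaar
  let ν : Measure F := .addHaar
  choose γ hγ₀ hγ using exists_isIntegralCurve_of_bounded (contDiff_splitField hv hw)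
    (lipschitzWith_splitField hvK hwK) (fun x ↦ max_le (hvM x.2) (hwM x.1))
  have hpres := measurePreserving_restrict_integralCurve_splitField μ ν hvK hwK hvM hwM hγ₀ hγ
    (t := |T| + 1) (by positivity) hS hSo.measurableSet
    fun x hx ↦ hSγ _ (hγ x) (by rwa [hγ₀]) _
  have hVpos : (μ.prod ν).restrict S V ≠ 0 := by
    rw [Measure.restrict_eq_self _ hVS]
    exact (hVo.measure_pos _ hV).ne'
  have : IsFiniteMeasure ((μ.prod ν).restrict S) :=
    isFiniteMeasure_restrict.2 hS.measure_lt_top.ne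
  obtain ⟨x, hx, k, hk, hkx⟩ :=
    hpres.exists_mem_iterate_mem hVo.measurableSet.nullMeasurableSet hVpos
  rw [iterate_isIntegralCurve_apply (lipschitzWith_splitField hvK hwK) hγ₀ hγ] at hkx
  refine ⟨γ x, hγ x, by rwa [hγ₀], k * (|T| + 1), ?_, hkx⟩
  have hk' : (1 : ℝ) ≤ k := Nat.one_le_cast.2 (Nat.one_le_iff_ne_zero.2 hk)
  nlinarith [le_abs_self T, abs_nonneg T]

theorem IsFirstIntegral.exists_recurrent_isIntegralCurve_splitField {G : Type*}
    [NormedAddCommGroup G] [NormedSpace ℝ G] {I : E × F → G}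
    (hI : IsFirstIntegral (splitField v w) I) (hv : ContDiff ℝ 1 v) (hw : ContDiff ℝ 1 w)
    {W : Set G} (hW : IsOpen W) (hIW : IsBounded (I ⁻¹' W)) {V : Set (E × F)} (hVo : IsOpen V)
    (hV : V.Nonempty) (hVW : V ⊆ I ⁻¹' W) (T : ℝ) :
    ∃ γ : ℝ → E × F, IsIntegralCurve γ (fun _ ↦ splitField v w) ∧
      γ 0 ∈ V ∧ ∃ t > T, γ t ∈ V := by
  obtain ⟨χ, hv', ⟨Kv, hKv⟩, ⟨Mv, hMv⟩, hvS⟩ := exists_lipschitz_bounded_eqOn hv hIW.image_snd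
  obtain ⟨ψ, hw', ⟨Kw, hKw⟩, ⟨Mw, hMw⟩, hwS⟩ := exists_lipschitz_bounded_eqOn hw hIW.image_fst
  replace hKv := hKv.weaken (le_max_left Kv Kw)
  replace hKw := hKw.weaken (le_max_right Kv Kw)
  have heq : EqOn (splitField (χ • v) (ψ • w)) (splitField v w) (I ⁻¹' W) := fun x hx ↦
    Prod.ext (hvS (mem_image_of_mem _ hx)) (hwS (mem_image_of_mem _ hx))
  have hstay (γ : ℝ → E × F) (hγ : IsIntegralCurve γ fun _ ↦ splitField (χ • v) (ψ • w))
      (h0 : γ 0 ∈ I ⁻¹' W) (t : ℝ) : γ t ∈ I ⁻¹' W := by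
    obtain ⟨γ', hγ'₀, hγ'⟩ := hI.exists_isIntegralCurve (contDiff_splitField hv hw)
      (hIW.subset (preimage_mono (singleton_subset_iff.2 h0)))
    have hγ'W (s : ℝ) : γ' s ∈ I ⁻¹' W := by
      rwa [mem_preimage, hI.apply_eq_apply hγ' s 0, hγ'₀]
    have hγ'' : IsIntegralCurve γ' fun _ ↦ splitField (χ • v) (ψ • w) := fun s ↦
      (hγ' s).congr_deriv (heq (hγ'W s)).symm
    rw [← eq_of_isIntegralCurve_of_lipschitzWith (lipschitzWith_splitField hKv hKw) hγ'' hγ hγ'₀]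
    exact hγ'W t
  obtain ⟨γ, hγ, h0, hret⟩ := exists_recurrent_isIntegralCurve_splitField_of_lipschitzWith
    hv' hw' hKv hKw (fun y ↦ (hMv y).trans (mod_cast le_max_left Mv Mw))
    (fun x ↦ (hMw x).trans (mod_cast le_max_right Mv Mw)) hIW
    (hW.preimage hI.differentiable.continuous) hstay hVo hV hVW T
  exact ⟨γ, fun t ↦ (hγ t).congr_deriv (heq (hstay γ hγ (hVW h0) t)), h0, hret⟩

end Recurrence

section Balance

variable {ι : Type*} [Fintype ι]

/-- Subtraction of the mean, `Fintype.balance`, as a continuous linear map; it passes from momenta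
to momenta relative to their mean. -/
def balanceCLM (ι : Type*) [Fintype ι] : (ι → ℝ) →L[ℝ] (ι → ℝ) :=
  LinearMap.toContinuousLinearMap
    { toFun := Fintype.balance
      map_add' := Fintype.balance_add
      map_smul' := fun c f ↦ by
        ext k
        simp [Fintype.balance_apply, ← Finset.mul_expect, mul_sub] }

theorem sum_balanceCLM (f : ι → ℝ) : ∑ k, balanceCLM ι f k = 0 := Fintype.sum_balance f

theorem balanceCLM_sub_balanceCLM (f : ι → ℝ) (j k : ι) :
    balanceCLM ι f j - balanceCLM ι f k = f j - f k :=
  sub_sub_sub_cancel_right ..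

theorem balanceCLM_eq_self {f : ι → ℝ} (hf : ∑ k, f k = 0) : balanceCLM ι f = f := by
  ext k
  change Fintype.balance f k = f k
  simp [Fintype.balance_apply, Fintype.expect_eq_sum_div_card, hf]

end Balance

theorem abs_le_card_mul_of_sum_eq_zero {ι : Type*} [Fintype ι] {f : ι → ℝ} {R : ℝ}
    (hf : ∑ k, f k = 0) (hR : ∀ k, f k ≤ R) (k : ι) : |f k| ≤ Fintype.card ι * R := by
  have hsum : ∑ j, (R - f j) = Fintype.card ι * R := by simp [hf]
  have hle : R - f k ≤ Fintype.card ι * R := hsum ▸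
    Finset.single_le_sum (fun j _ ↦ sub_nonneg.2 (hR j)) (Finset.mem_univ k)
  have hcard : (1 : ℝ) ≤ Fintype.card ι := mod_cast Fintype.card_pos_iff.2 ⟨k⟩
  have hR₀ : 0 ≤ R := by
    by_contra! h
    have : ∑ j, f j < 0 := Finset.sum_neg (fun j _ ↦ (hR j).trans_lt h) ⟨k, Finset.mem_univ k⟩
    exact this.ne hf
  exact abs_le.2 ⟨by linarith, (hR k).trans (le_mul_of_one_le_left hR₀ hcard)⟩

section ParticleSystem

open ContinuousLinearMap (proj)

variable {n : ℕ} [NeZero n] {Φ : ℝ → ℝ}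

/-- The argument `q_k - q_{k+1}` of the `k`-th interaction potential. -/
def gap (q : Fin n → ℝ) (k : Fin n) : ℝ := q k - q (k + 1)

/-- The force `φ(q_{k-1} - q_k) - φ(q_k - q_{k+1})`, with `φ = deriv Φ`, acting on particle `k`. -/
def force (Φ : ℝ → ℝ) (q : Fin n → ℝ) (k : Fin n) : ℝ :=
  deriv Φ (gap q (k - 1)) - deriv Φ (gap q k)

/-- The drift with velocities measured relative to the mean momentum, `q' = p - mean p`. Unlike
`drift`, it conserves the total position, which makes its motions bounded. -/
def relativeDrift (n : ℕ) [NeZero n] (Φ : ℝ → ℝ) : State n → State n :=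
  splitField (balanceCLM (Fin n)) (force Φ)

/-- The Hamiltonian `∑ p_k² / 2 + Φ(q_k - q_{k+1})`. -/
def energy (Φ : ℝ → ℝ) (x : State n) : ℝ := ∑ k, (x.2 k ^ 2 / 2 + Φ (gap x.1 k))

/-- The projection onto the zero-momentum hyperplane that subtracts the mean momentum and keeps the
positions. -/
def restFrame (n : ℕ) : State n →L[ℝ] State n :=
  (ContinuousLinearMap.id ℝ (Fin n → ℝ)).prodMap (balanceCLM (Fin n))

theorem sum_gap (q : Fin n → ℝ) : ∑ k, gap q k = 0 := by
  simp only [gap, Finset.sum_sub_distrib, sub_eq_zero]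
  exact (Equiv.sum_comp (Equiv.addRight (1 : Fin n)) q).symm

theorem sum_mul_sub_pred_eq_neg_sum_mul_sub_succ (a b : Fin n → ℝ) :
    ∑ k, b k * (a (k - 1) - a k) = -∑ k, a k * (b k - b (k + 1)) := by
  have hshift : ∑ k, b k * a (k - 1) = ∑ k, b (k + 1) * a k := by
    simpa using (Equiv.sum_comp (Equiv.addRight (1 : Fin n)) fun k ↦ b k * a (k - 1)).symm
  simp only [mul_sub, Finset.sum_sub_distrib, hshift, mul_comm]
  ring

theorem sum_force (q : Fin n → ℝ) : ∑ k, force Φ q k = 0 := by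
  simpa [force] using sum_mul_sub_pred_eq_neg_sum_mul_sub_succ (fun k ↦ deriv Φ (gap q k)) 1

theorem drift_restFrame (x : State n) :
    drift n Φ (restFrame n x) = restFrame n (relativeDrift n Φ x) := by
  refine Prod.ext ?_ ?_
  · rfl
  · change _ = balanceCLM (Fin n) (force Φ x.1)
    rw [balanceCLM_eq_self (sum_force x.1)]
    ext k
    simp [drift, restFrame, force, gap]

theorem isFirstIntegral_sum_position :
    IsFirstIntegral (relativeDrift n Φ) fun x ↦ ∑ k, x.1 k where
  differentiable := by fun_prop
  fderiv_apply_eq_zero x := by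
    have hderiv : HasFDerivAt (fun x : State n ↦ ∑ k, x.1 k)
        (∑ k, .proj k ∘L .fst ℝ (Fin n → ℝ) (Fin n → ℝ)) x :=
      .fun_sum fun k _ ↦ (proj k ∘L .fst ℝ (Fin n → ℝ) (Fin n → ℝ)).hasFDerivAt
    rw [hderiv.fderiv]
    simpa [relativeDrift, splitField] using sum_balanceCLM x.2

theorem hasFDerivAt_energy (hΦ : Differentiable ℝ Φ) (x : State n) :
    HasFDerivAt (energy Φ)
      (∑ k, (x.2 k • .proj k ∘L .snd ℝ (Fin n → ℝ) (Fin n → ℝ) +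
        deriv Φ (gap x.1 k) • (.proj k ∘L .fst ℝ (Fin n → ℝ) (Fin n → ℝ) -
          .proj (k + 1) ∘L .fst ℝ (Fin n → ℝ) (Fin n → ℝ)))) x := by
  have hq (k : Fin n) : HasFDerivAt (fun x : State n ↦ x.1 k) (.proj k ∘L .fst ℝ _ _) x :=
    (proj k ∘L .fst ℝ (Fin n → ℝ) (Fin n → ℝ)).hasFDerivAt
  have hp (k : Fin n) : HasFDerivAt (fun x : State n ↦ x.2 k) (.proj k ∘L .snd ℝ _ _) x :=
    (proj k ∘L .snd ℝ (Fin n → ℝ) (Fin n → ℝ)).hasFDerivAt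
  have hsq (r : ℝ) : HasDerivAt (fun r : ℝ ↦ r ^ 2 / 2) r r := by
    simpa using ((hasDerivAt_id r).pow 2).div_const 2
  exact .fun_sum fun k _ ↦ ((hsq _).comp_hasFDerivAt x (hp k)).add
    ((hΦ _).hasDerivAt.comp_hasFDerivAt x ((hq k).sub (hq (k + 1))))

theorem isFirstIntegral_energy (hΦ : Differentiable ℝ Φ) :
    IsFirstIntegral (relativeDrift n Φ) (energy Φ) where
  differentiable x := (hasFDerivAt_energy hΦ x).differentiableAt
  fderiv_apply_eq_zero x := by
    have hwork := sum_mul_sub_pred_eq_neg_sum_mul_sub_succ (fun k ↦ deriv Φ (gap x.1 k)) x.2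
    rw [(hasFDerivAt_energy hΦ x).fderiv]
    simp [relativeDrift, splitField, balanceCLM_sub_balanceCLM, force, Finset.sum_add_distrib,
      hwork]

theorem contDiff_force {k : WithTop ℕ∞} (hΦ : ContDiff ℝ (k + 1) Φ) :
    ContDiff ℝ k (force Φ : (Fin n → ℝ) → Fin n → ℝ) := by
  have hφ : ContDiff ℝ k (deriv Φ) := (contDiff_succ_iff_deriv.1 hΦ).2.2
  have hgap (j : Fin n) : ContDiff ℝ k (gap · j) := by
    unfold gap
    fun_prop
  exact contDiff_pi.2 fun j ↦ (hφ.comp (hgap (j - 1))).sub (hφ.comp (hgap j))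

open Fin.CommRing in
theorem eq_zero_of_gap_eq_zero {q : Fin n → ℝ} (hgap : gap q = 0) (hsum : ∑ k, q k = 0) :
    q = 0 := by
  have hper : Function.Periodic q 1 := fun k ↦ (sub_eq_zero.1 (congrFun hgap k)).symm
  have hconst (k : Fin n) : q k = q 0 := by simpa using hper.nsmul_eq k
  have hq : q 0 = 0 := by simpa [hconst, NeZero.ne n] using hsum
  exact funext fun k ↦ (hconst k).trans hq

theorem isBounded_of_isBounded_gap_of_isBounded_sum {s : Set (Fin n → ℝ)}
    (hgap : IsBounded (gap '' s)) (hsum : IsBounded ((fun q ↦ ∑ k, q k) '' s)) :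
    IsBounded s := by
  let L : (Fin n → ℝ) →ₗ[ℝ] (Fin n → ℝ) × ℝ :=
    { toFun := fun q ↦ (gap q, ∑ k, q k)
      map_add' := fun q q' ↦ by ext <;> simp [gap, add_sub_add_comm, Finset.sum_add_distrib]
      map_smul' := fun c q ↦ by ext <;> simp [gap, mul_sub, Finset.mul_sum] }
  have hker : L.ker = ⊥ := LinearMap.ker_eq_bot'.2 fun q hq ↦
    eq_zero_of_gap_eq_zero (congrArg Prod.fst hq) (congrArg Prod.snd hq)
  obtain ⟨K, -, hK⟩ := L.exists_antilipschitzWith hker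
  exact (hK.isBounded_preimage (hgap.prod hsum)).subset fun q hq ↦
    ⟨mem_image_of_mem _ hq, mem_image_of_mem _ hq⟩

theorem exists_abs_le_of_energy_le (hbdd : BddBelow (range Φ)) (htop : Tendsto Φ atTop atTop)
    (c : ℝ) : ∃ R, ∀ x : State n, energy Φ x ≤ c → ∀ k, |x.2 k| ≤ R ∧ |gap x.1 k| ≤ R := by
  obtain ⟨m, hm⟩ := hbdd
  replace hm (y : ℝ) : m ≤ Φ y := hm (mem_range_self y)
  obtain ⟨r, hr⟩ := eventually_atTop.1 (htop.eventually_gt_atTop (c - n * m + m))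
  refine ⟨max √(2 * (c - n * m)) (n * r), fun x hx k ↦ ?_⟩
  have hterm (k : Fin n) : x.2 k ^ 2 / 2 + Φ (gap x.1 k) ≤ c - n * m + m := by
    have hsum : ∑ k, (x.2 k ^ 2 / 2 + Φ (gap x.1 k) - m) = energy Φ x - n * m := by simp [energy]
    have hnonneg (k : Fin n) : 0 ≤ x.2 k ^ 2 / 2 + Φ (gap x.1 k) - m := by
      linarith [hm (gap x.1 k), sq_nonneg (x.2 k)]
    linarith [Finset.single_le_sum (fun k _ ↦ hnonneg k) (Finset.mem_univ k)]
  have hgap (k : Fin n) : gap x.1 k ≤ r := by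
    by_contra! h
    linarith [hr _ h.le, hterm k, sq_nonneg (x.2 k)]
  constructor
  · exact (Real.abs_le_sqrt (by linarith [hterm k, hm (gap x.1 k)])).trans (le_max_left _ _)
  · simpa using Or.inr (abs_le_card_mul_of_sum_eq_zero (sum_gap x.1) hgap k)

theorem isBounded_preimage_energy_sum_position (hbdd : BddBelow (range Φ))
    (htop : Tendsto Φ atTop atTop) (c : ℝ) {B : Set ℝ} (hB : IsBounded B) :
    IsBounded ((fun x : State n ↦ (energy Φ x, ∑ k, x.1 k)) ⁻¹' (Iio c ×ˢ B)) := by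
  obtain ⟨R, hR⟩ := exists_abs_le_of_energy_le (n := n) hbdd htop c
  have hbound : IsBounded {f : Fin n → ℝ | ∀ k, |f k| ≤ R} := by
    simpa only [abs_le, ← mem_Icc, ← mem_univ_pi] using!
      IsBounded.pi fun _ : Fin n ↦ isBounded_Icc (-R) R
  refine isBounded_image_fst_and_snd.1
    ⟨isBounded_of_isBounded_gap_of_isBounded_sum (hbound.subset ?_) (hB.subset ?_),
      hbound.subset ?_⟩
  · rintro _ ⟨_, ⟨x, hx, rfl⟩, rfl⟩ k
    exact (hR x hx.1.le k).2
  · rintro _ ⟨_, ⟨x, hx, rfl⟩, rfl⟩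
    exact hx.2
  · rintro _ ⟨x, hx, rfl⟩ k
    exact (hR x hx.1.le k).1

end ParticleSystem

theorem nonwandering_on_zero_momentum_general (n : ℕ) [NeZero n] (Φ : ℝ → ℝ)
    (hΦ : ContDiff ℝ 2 Φ) (hbdd : BddBelow (range Φ)) (htop : Tendsto Φ atTop atTop)
    (xt : State n) (hxt : ∑ i, xt.2 i = 0) (U : Set (State n)) (hU : IsOpen U) (hxU : xt ∈ U)
    (T : ℝ) :
    ∃ x : ℝ → State n, IsIntegralCurve x (fun _ ↦ drift n Φ) ∧
      x 0 ∈ U ∧ (∑ i, (x 0).2 i) = 0 ∧ ∃ t > T, x t ∈ U := by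
  let I : State n → ℝ × ℝ := fun x ↦ (energy Φ x, ∑ k, x.1 k)
  let W : Set (ℝ × ℝ) := Iio (energy Φ xt + 1) ×ˢ ball (∑ k, xt.1 k) 1
  have hI : IsFirstIntegral (relativeDrift n Φ) I :=
    (isFirstIntegral_energy (hΦ.differentiable two_ne_zero)).prodMk isFirstIntegral_sum_position
  have hW : IsOpen W := isOpen_Iio.prod isOpen_ball
  have hIW : IsBounded (I ⁻¹' W) :=
    isBounded_preimage_energy_sum_position hbdd htop _ isBounded_ball
  have hxW : xt ∈ I ⁻¹' W := ⟨lt_add_one (energy Φ xt), mem_ball_self one_pos⟩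
  have hrest : restFrame n xt = xt := Prod.ext rfl (balanceCLM_eq_self hxt)
  obtain ⟨γ, hγ, h₀, t, ht, hret⟩ := hI.exists_recurrent_isIntegralCurve_splitField
    (balanceCLM (Fin n)).contDiff (contDiff_force hΦ) hW hIW
    ((hW.preimage hI.differentiable.continuous).inter (hU.preimage (restFrame n).continuous))
    ⟨xt, hxW, by rwa [mem_preimage, hrest]⟩ inter_subset_left T
  refine ⟨restFrame n ∘ γ, fun s ↦ ?_, h₀.2, sum_balanceCLM _, t, ht, hret.2⟩
  exact ((restFrame n).hasFDerivAt.comp_hasDerivAt s (hγ s)).congr_deriv (drift_restFrame _).symm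

/-- Nonwandering property of the free dynamics on the zero-momentum
hyperplane `Π`: for every `x̃ ∈ Π`, every open neighborhood `U` of `x̃` and every `T > 0`
there are `y ∈ U ∩ Π`, `t > T` and a free solution starting at `y` returning to `U`
at time `t`. -/
theorem nonwandering_on_zero_momentum (n : ℕ) [NeZero n] (hn : 3 ≤ n) (Φ : ℝ → ℝ)
    (hadm : Admissible Φ) (xt : State n) (hxt : (∑ i, xt.2 i) = 0)
    (U : Set (State n)) (hU : IsOpen U) (hxU : xt ∈ U) (T : ℝ) (hT : 0 < T) :
    ∃ y ∈ U, (∑ i, y.2 i) = 0 ∧ ∃ t > T, ∃ x : ℝ → State n,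
      x 0 = y ∧ (∀ s ∈ Set.Icc 0 t, HasDerivAt x (drift n Φ (x s)) s) ∧ x t ∈ U := by
  obtain ⟨hΦ, hbdd, htop⟩ := hadm
  obtain ⟨x, hx, h₀, hmom, t, ht, hret⟩ := nonwandering_on_zero_momentum_general n Φ
    (contDiff_iff_contDiffAt.2 fun y ↦ (hΦ y).contDiffAt) hbdd htop xt hxt U hU hxU T
  exact ⟨x 0, h₀, hmom, t, ht, x, rfl, fun s _ ↦ hx s, hret⟩
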